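/- arXiv:2506.12416 — 8 statements merged into one kernel-verified Lean document; each statement's English description precedes it below -/
import Mathlib

section
/- There exists a finite type γ and a joint distribution Q : α × β × γ → ℝ (nonnegative, summing to 1) satisfying consistency, informativeness, and perfect secrecy if and only if for every y ∈ β one has ∑_{x ∈ α} P(x,y)/P_X(x) ≤ 1 (i.e., the matrix of conditional probabilities P_{Y|X}(y|x) is column-substochastic). -/
/-!
Writing `W x y = P(x, y) / P_X(x)`, a decodable `z` reveals for each `y` at most one `x`, and by
secrecy `Q(x, y, z) / P_X(x) ≤ Q_Z(z)`; summing over `x` and then over `z` bounds the column sums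
of `W` by `1`.

Conversely, a row-stochastic and column-substochastic `W` is the upper right block of a doubly
stochastic matrix whose upper left block vanishes. The permutations in its Birkhoff decomposition
therefore restrict to embeddings `α ↪ β`, so `W` is a mixture of embeddings. Alice draws the
embedding `e` from this mixture independently of `X`, arranges that `Y = e X`, and announces `e`:
it is independent of `X`, and injectivity lets Bob recover `X` from `Y`.
-/

open Finset Function Matrix

section Birkhoff

variable {R ι m n : Type*}

theorem sum_le_of_support_subsingleton [AddCommMonoid R] [Preorder R] [Fintype ι] {f : ι → R}
    {c : R} (hf : (support f).Subsingleton) (hfc : ∀ i, f i ≤ c) (hc : 0 ≤ c) :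
    ∑ i, f i ≤ c := by
  by_cases h : ∃ i, f i ≠ 0
  · obtain ⟨i, hi⟩ := h
    rw [Fintype.sum_eq_single i fun j hji => not_not.1 fun hj => hji (hf hj hi)]
    exact hfc i
  · push Not at h
    simpa only [h, sum_const_zero] using hc

theorem exists_embedding_of_forall_isRight (f : ι ↪ m ⊕ n) (hf : ∀ i, (f i).isRight) :
    ∃ e : ι ↪ n, ∀ i, f i = Sum.inr (e i) := by
  choose e he using fun i => Sum.isRight_iff.1 (hf i)
  exact ⟨⟨e, fun i j hij => f.injective (by rw [he, he, hij])⟩, he⟩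

variable [Fintype m] [Fintype n] [DecidableEq m] [DecidableEq n]

/-- The square matrix with upper right block `W` and zero upper left block that is doubly stochastic
as soon as `W` is row-stochastic and column-substochastic: the diagonal block takes up the missing
column mass of `W`. -/
def doublyStochasticCompletion [Ring R] (W : Matrix m n R) : Matrix (m ⊕ n) (m ⊕ n) R :=
  fromBlocks 0 W Wᵀ (diagonal fun j => 1 - ∑ i, W i j)

theorem doublyStochasticCompletion_mem_doublyStochastic [Ring R] [PartialOrder R]
    [IsOrderedRing R] {W : Matrix m n R} (hW : ∀ i j, 0 ≤ W i j) (hrow : ∀ i, ∑ j, W i j = 1)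
    (hcol : ∀ j, ∑ i, W i j ≤ 1) :
    doublyStochasticCompletion W ∈ doublyStochastic R (m ⊕ n) := by
  refine mem_doublyStochastic_iff_sum.2 ⟨?_, ?_, ?_⟩
  · rintro (i | j) (i' | j')
    · exact le_rfl
    · exact hW i j'
    · exact hW i' j
    · obtain rfl | hj := eq_or_ne j j'
      · simpa [doublyStochasticCompletion] using hcol j
      · simp [doublyStochasticCompletion, hj]
  · rintro (i | j)
    · simp [doublyStochasticCompletion, hrow]
    · simp [doublyStochasticCompletion, diagonal_apply]
  · rintro (i | j)
    · simp [doublyStochasticCompletion, hrow]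
    · simp [doublyStochasticCompletion, diagonal_apply]

theorem apply_ne_of_sum_smul_permMatrix_apply_eq_zero [Semiring R] [PartialOrder R]
    [IsOrderedRing R] {w : Equiv.Perm n → R} (hw : ∀ σ, 0 ≤ w σ) {i j : n}
    (hij : (∑ σ, w σ • σ.permMatrix R) i j = 0) {σ : Equiv.Perm n} (hσ : w σ ≠ 0) : σ i ≠ j := by
  intro hσij
  have hsum : ∑ τ, w τ * τ.permMatrix R i j = 0 := by
    simpa only [Matrix.sum_apply, Matrix.smul_apply, smul_eq_mul] using hij
  have hnonneg (τ : Equiv.Perm n) : 0 ≤ w τ * τ.permMatrix R i j :=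
    mul_nonneg (hw τ) (nonneg_of_mem_doublyStochastic permMatrix_mem_doublyStochastic)
  have hzero := (sum_eq_zero_iff_of_nonneg fun τ _ => hnonneg τ).1 hsum σ (mem_univ σ)
  exact hσ (by simpa [Equiv.Perm.permMatrix, PEquiv.toMatrix_apply, hσij] using hzero)

end Birkhoff

section OrderedField

variable {K : Type*} [Field K] [LinearOrder K] [IsStrictOrderedRing K]

theorem mem_convexHull_range_submatrix_one_of_substochastic {m n : Type*} [Fintype m] [Fintype n]
    [DecidableEq n] {W : Matrix m n K} (hW : ∀ i j, 0 ≤ W i j) (hrow : ∀ i, ∑ j, W i j = 1)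
    (hcol : ∀ j, ∑ i, W i j ≤ 1) :
    W ∈ convexHull K (Set.range fun e : m ↪ n => (1 : Matrix n n K).submatrix e id) := by
  classical
  obtain ⟨w, hw, hw_sum, hwW⟩ := exists_eq_sum_perm_of_mem_doublyStochastic
    (doublyStochasticCompletion_mem_doublyStochastic hW hrow hcol)
  have hblock : univ.centerMass w (fun σ => (σ.permMatrix K).toBlocks₁₂) = W := by
    rw [centerMass_eq_of_sum_1 _ _ hw_sum]
    ext i j
    simpa [Matrix.sum_apply, toBlocks₁₂, doublyStochasticCompletion] using
      congr_fun₂ hwW (Sum.inl i) (Sum.inr j)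
  rw [← hblock, ← centerMass_filter_ne_zero]
  refine centerMass_mem_convexHull _ (fun σ _ => hw σ) ?_ fun σ hσ => ?_
  · rw [sum_filter_ne_zero, hw_sum]
    exact one_pos
  have hright (i : m) : (σ (Sum.inl i)).isRight := by
    have hne (i' : m) : σ (Sum.inl i) ≠ Sum.inl i' :=
      apply_ne_of_sum_smul_permMatrix_apply_eq_zero hw (by rw [hwW]; rfl) (mem_filter.1 hσ).2
    rcases h : σ (Sum.inl i) with i' | j
    · exact absurd h (hne i')
    · rfl
  obtain ⟨e, he⟩ :=
    exists_embedding_of_forall_isRight (Embedding.inl.trans σ.toEmbedding) hright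
  refine ⟨e, ?_⟩
  ext i j
  have hei : σ (Sum.inl i) = Sum.inr (e i) := he i
  simp [toBlocks₁₂, Equiv.Perm.permMatrix, PEquiv.toMatrix_apply, one_apply, hei, eq_comm]

theorem exists_sum_smul_submatrix_one_eq_of_substochastic {m n : Type*} [Fintype m] [Fintype n]
    [DecidableEq n] {W : Matrix m n K} (hW : ∀ i j, 0 ≤ W i j) (hrow : ∀ i, ∑ j, W i j = 1)
    (hcol : ∀ j, ∑ i, W i j ≤ 1) :
    ∃ (ι : Type) (_ : Fintype ι) (w : ι → K) (e : ι → m ↪ n), (∀ k, 0 ≤ w k) ∧ ∑ k, w k = 1 ∧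
      ∑ k, w k • (1 : Matrix n n K).submatrix (e k) id = W := by
  have hmem := mem_convexHull_range_submatrix_one_of_substochastic hW hrow hcol
  rw [mem_convexHull_iff_exists_fintype] at hmem
  obtain ⟨ι, _, w, M, hw, hw_sum, hM, hwM⟩ := hmem
  choose e he using hM
  exact ⟨ι, inferInstance, w, e, hw, hw_sum, by simpa only [he] using hwM⟩

end OrderedField

section SecretSignal

variable {K α β γ : Type*} [Fintype γ]

/-- The joint law of `(X, Y, Z)` when `X ∼ p` and `Z ∼ w` are independent and `Y = e Z X`. -/
def embeddingSignal [MulZeroClass K] [DecidableEq β] (p : α → K) (w : γ → K) (e : γ → α ↪ β) :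
    α × β × γ → K :=
  fun (x, y, z) => if e z x = y then p x * w z else 0

theorem sum_embeddingSignal [CommSemiring K] [DecidableEq β] (p : α → K) (w : γ → K)
    (e : γ → α ↪ β) (x : α) (y : β) :
    ∑ z, embeddingSignal p w e (x, y, z) =
      p x * (∑ z, w z • (1 : Matrix β β K).submatrix (e z) id) x y := by
  simp [embeddingSignal, Matrix.sum_apply, one_apply, mul_sum]

variable [Fintype α] [Fintype β]

/-- `Q` is a joint law of `(X, Y, Z)` whose `(X, Y)`-marginal is `P` and in which the public signal
`Z` together with `Y` determines `X` (on atoms of positive mass), while `Z` alone is independent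
of `X`. -/
structure IsSecretSignal [Semiring K] [PartialOrder K] (P : α × β → K) (Q : α × β × γ → K) :
    Prop where
  nonneg : ∀ x y z, 0 ≤ Q (x, y, z)
  sum_eq_one : ∑ x, ∑ y, ∑ z, Q (x, y, z) = 1
  consistent : ∀ x y, ∑ z, Q (x, y, z) = P (x, y)
  informative : ∀ y z x x', 0 < Q (x, y, z) → 0 < Q (x', y, z) → x = x'
  secret : ∀ x z, ∑ y, Q (x, y, z) = (∑ y, P (x, y)) * ∑ x', ∑ y, Q (x', y, z)

theorem isSecretSignal_embeddingSignal [CommSemiring K] [PartialOrder K] [IsOrderedRing K]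
    [DecidableEq β] {P : α × β → K} {p : α → K} {w : γ → K} {e : γ → α ↪ β} (hp : ∀ x, 0 ≤ p x)
    (hp_sum : ∑ x, p x = 1) (hw : ∀ z, 0 ≤ w z) (hw_sum : ∑ z, w z = 1)
    (hP : ∀ x y, ∑ z, embeddingSignal p w e (x, y, z) = P (x, y)) :
    IsSecretSignal P (embeddingSignal p w e) := by
  have hXZ (x : α) (z : γ) : ∑ y, embeddingSignal p w e (x, y, z) = p x * w z := by
    simp [embeddingSignal]
  have hX (x : α) : ∑ y, P (x, y) = p x := by
    simp_rw [← hP]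
    rw [sum_comm]
    simp_rw [hXZ, ← mul_sum, hw_sum, mul_one]
  have hZ (z : γ) : ∑ x, ∑ y, embeddingSignal p w e (x, y, z) = w z := by
    simp_rw [hXZ, ← sum_mul, hp_sum, one_mul]
  have apply_eq_of_pos {x : α} {y : β} {z : γ} (h : 0 < embeddingSignal p w e (x, y, z)) :
      e z x = y :=
    not_not.1 fun hne => h.ne' (if_neg hne)
  exact
    { nonneg := fun x y z => ite_nonneg (mul_nonneg (hp x) (hw z)) le_rfl
      sum_eq_one := by simp_rw [hP, hX, hp_sum]
      consistent := hP
      informative := fun y z x x' hx hx' =>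
        (e z).injective ((apply_eq_of_pos hx).trans (apply_eq_of_pos hx').symm)
      secret := fun x z => by rw [hXZ, hX, hZ] }

variable [Field K] [LinearOrder K] [IsStrictOrderedRing K] {P : α × β → K}

namespace IsSecretSignal

variable {Q : α × β × γ → K}

theorem div_le_sum (h : IsSecretSignal P Q) (x : α) (y : β) (z : γ) :
    Q (x, y, z) / ∑ y', P (x, y') ≤ ∑ x', ∑ y', Q (x', y', z) := by
  have hPX : 0 ≤ ∑ y', P (x, y') := by
    simp_rw [← h.consistent]
    exact sum_nonneg fun y' _ => sum_nonneg fun z' _ => h.nonneg x y' z'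
  have hQZ : 0 ≤ ∑ x', ∑ y', Q (x', y', z) :=
    sum_nonneg fun x' _ => sum_nonneg fun y' _ => h.nonneg x' y' z
  refine div_le_of_le_mul₀ hPX hQZ ?_
  calc Q (x, y, z) ≤ ∑ y', Q (x, y', z) :=
        single_le_sum (f := fun y' => Q (x, y', z)) (fun y' _ => h.nonneg x y' z) (mem_univ y)
    _ = (∑ x', ∑ y', Q (x', y', z)) * ∑ y', P (x, y') := by rw [h.secret, mul_comm]

theorem sum_div_le_sum (h : IsSecretSignal P Q) (y : β) (z : γ) :
    ∑ x, Q (x, y, z) / ∑ y', P (x, y') ≤ ∑ x, ∑ y', Q (x, y', z) := by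
  have pos_of_mem_support {x : α} (hx : Q (x, y, z) / ∑ y', P (x, y') ≠ 0) : 0 < Q (x, y, z) :=
    (h.nonneg x y z).lt_of_ne' (div_ne_zero_iff.1 hx).1
  refine sum_le_of_support_subsingleton (fun x hx x' hx' => ?_) (h.div_le_sum · y z) ?_
  · exact h.informative y z x x' (pos_of_mem_support hx) (pos_of_mem_support hx')
  · exact sum_nonneg fun x _ => sum_nonneg fun y' _ => h.nonneg x y' z

theorem sum_div_le_one (h : IsSecretSignal P Q) (y : β) :
    ∑ x, P (x, y) / ∑ y', P (x, y') ≤ 1 :=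
  calc ∑ x, P (x, y) / ∑ y', P (x, y')
      = ∑ x, ∑ z, Q (x, y, z) / ∑ y', P (x, y') := by simp_rw [← sum_div, h.consistent]
    _ = ∑ z, ∑ x, Q (x, y, z) / ∑ y', P (x, y') := sum_comm
    _ ≤ ∑ z, ∑ x, ∑ y', Q (x, y', z) := sum_le_sum fun z _ => h.sum_div_le_sum y z
    _ = ∑ x, ∑ y', ∑ z, Q (x, y', z) := by
        rw [sum_comm]
        exact sum_congr rfl fun x _ => sum_comm
    _ = 1 := h.sum_eq_one

end IsSecretSignal

theorem exists_isSecretSignal_of_sum_div_le_one (hP : ∀ x y, 0 ≤ P (x, y))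
    (hP_sum : ∑ x, ∑ y, P (x, y) = 1) (hPX : ∀ x, 0 < ∑ y, P (x, y))
    (hcol : ∀ y, ∑ x, P (x, y) / ∑ y', P (x, y') ≤ 1) :
    ∃ (γ : Type) (_ : Fintype γ) (Q : α × β × γ → K), IsSecretSignal P Q := by
  classical
  obtain ⟨γ, _, w, e, hw, hw_sum, hwe⟩ := exists_sum_smul_submatrix_one_eq_of_substochastic
    (W := of fun x y => P (x, y) / ∑ y', P (x, y')) (fun x y => div_nonneg (hP x y) (hPX x).le)
    (fun x => by simp only [of_apply, ← sum_div, div_self (hPX x).ne']) hcol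
  refine ⟨γ, inferInstance, embeddingSignal (fun x => ∑ y, P (x, y)) w e,
    isSecretSignal_embeddingSignal (fun x => (hPX x).le) hP_sum hw hw_sum fun x y => ?_⟩
  rw [sum_embeddingSignal, hwe]
  exact mul_div_cancel₀ _ (hPX x).ne'

theorem secret_communication_iff_column_substochastic_general (P : α × β → K)
    (hP : ∀ x y, 0 ≤ P (x, y)) (hP_sum : ∑ x, ∑ y, P (x, y) = 1)
    (hPX : ∀ x, 0 < ∑ y, P (x, y)) :
    (∃ (γ : Type) (_ : Fintype γ) (Q : α × β × γ → K), IsSecretSignal P Q) ↔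
      ∀ y, ∑ x, P (x, y) / ∑ y', P (x, y') ≤ 1 :=
  ⟨fun ⟨_, _, _, h⟩ => h.sum_div_le_one, exists_isSecretSignal_of_sum_div_le_one hP hP_sum hPX⟩

end SecretSignal

/-- Alice can construct a public signal `Z` (a finite type `γ` with joint
distribution `Q`) satisfying consistency, informativeness, and perfect
secrecy if and only if the matrix of conditional probabilities
`P_{Y|X}(y|x) = P(x,y) / P_X(x)` is column-substochastic. -/
theorem secret_communication_iff_column_substochastic
    {α β : Type} [Fintype α] [Fintype β] [Nonempty α] [Nonempty β]
    (P : α × β → ℝ)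
    (hP0 : ∀ x y, 0 ≤ P (x, y))
    (hP1 : ∑ x : α, ∑ y : β, P (x, y) = 1)
    (hPX : ∀ x : α, 0 < ∑ y : β, P (x, y)) :
    (∃ (γ : Type) (_ : Fintype γ) (Q : α × β × γ → ℝ),
      (∀ x y z, 0 ≤ Q (x, y, z)) ∧
      (∑ x : α, ∑ y : β, ∑ z : γ, Q (x, y, z)) = 1 ∧
      -- consistency
      (∀ x y, ∑ z : γ, Q (x, y, z) = P (x, y)) ∧
      -- informativeness
      (∀ (y : β) (z : γ) (x x' : α),
        0 < Q (x, y, z) → 0 < Q (x', y, z) → x = x') ∧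
      -- perfect secrecy
      (∀ (x : α) (z : γ), ∑ y : β, Q (x, y, z) =
        (∑ y : β, P (x, y)) * (∑ x' : α, ∑ y : β, Q (x', y, z)))) ↔
    (∀ y : β, ∑ x : α, P (x, y) / (∑ y' : β, P (x, y')) ≤ 1) := by
  rw [← secret_communication_iff_column_substochastic_general P hP0 hP1 hPX]
  exact ⟨fun ⟨γ, i, Q, h₀, h₁, hc, hi, hs⟩ => ⟨γ, i, Q, h₀, h₁, hc, hi, hs⟩, fun ⟨γ, i, Q, hQ⟩ =>
    ⟨γ, i, Q, hQ.nonneg, hQ.sum_eq_one, hQ.consistent, hQ.informative, hQ.secret⟩⟩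
end

section
/- (Necessity) If there exist a finite type γ and a joint distribution Q : α × β × γ → ℝ (nonnegative, summing to 1) satisfying consistency, informativeness, and perfect secrecy, then for every y ∈ β one has ∑_{x ∈ α} P(x,y)/P_X(x) ≤ 1. -/
/-!
Fix `y` and let `D x` be the set of signals `z` with `Q (x, y, z) > 0`. On `D x` the mass
`Q (x, y, z)` is at most `Q_XZ (x, z)`, which by secrecy is `P_X x * Q_Z z`; summing over `D x`
gives `P (x, y) / P_X x ≤ Q_Z (D x)`. Informativeness makes the sets `D x` pairwise disjoint, so
these bounds add up to at most the total mass of `Q_Z`.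
-/

open Finset

theorem sum_sum_le_sum_univ_of_pairwise_disjoint {ι κ M : Type*} [Fintype ι] [Fintype κ]
    [AddCommMonoid M] [PartialOrder M] [IsOrderedAddMonoid M] {D : ι → Finset κ}
    (hD : Pairwise (Function.onFun Disjoint D)) {w : κ → M} (hw : ∀ k, 0 ≤ w k) :
    ∑ i, ∑ k ∈ D i, w k ≤ ∑ k, w k := by
  rw [← sum_disjiUnion univ D (hD.set_pairwise _)]
  exact sum_le_univ_sum_of_nonneg hw

section DecodingRegion

variable {𝕜 α β γ : Type*} [Fintype γ]

/-- The signals `z` that, together with `y`, are compatible with the secret `x`. When `Q` is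
informative, these are the signals from which someone who knows `y` decodes `x`. -/
def decodingRegion [Zero 𝕜] [LinearOrder 𝕜] (Q : α × β × γ → 𝕜) (y : β) (x : α) : Finset γ :=
  {z | 0 < Q (x, y, z)}

theorem pairwise_disjoint_decodingRegion [Zero 𝕜] [LinearOrder 𝕜] {Q : α × β × γ → 𝕜} {y : β}
    (informative : ∀ z x x', 0 < Q (x, y, z) → 0 < Q (x', y, z) → x = x') :
    Pairwise (Function.onFun Disjoint (decodingRegion Q y)) := fun x x' hne =>
  disjoint_filter.2 fun z _ hx hx' => hne (informative z x x' hx hx')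

theorem sum_decodingRegion [AddCommMonoid 𝕜] [LinearOrder 𝕜] {Q : α × β × γ → 𝕜} {x : α} {y : β}
    (hQ : ∀ z, 0 ≤ Q (x, y, z)) :
    ∑ z ∈ decodingRegion Q y x, Q (x, y, z) = ∑ z, Q (x, y, z) :=
  sum_filter_of_ne fun z _ hne => (hQ z).lt_of_ne' hne

theorem sum_div_le_sum_decodingRegion [Field 𝕜] [LinearOrder 𝕜] [IsStrictOrderedRing 𝕜]
    [Fintype β] {Q : α × β × γ → 𝕜} {x : α} (hQ : ∀ y z, 0 ≤ Q (x, y, z)) {p : 𝕜} (hp : 0 < p)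
    {w : γ → 𝕜} (secrecy : ∀ z, ∑ y, Q (x, y, z) ≤ p * w z) (y : β) :
    (∑ z, Q (x, y, z)) / p ≤ ∑ z ∈ decodingRegion Q y x, w z := by
  rw [div_le_iff₀' hp, mul_sum, ← sum_decodingRegion (hQ y)]
  refine sum_le_sum fun z _ => ?_
  calc Q (x, y, z) ≤ ∑ y', Q (x, y', z) :=
        single_le_sum (f := fun y' => Q (x, y', z)) (fun y' _ => hQ y' z) (mem_univ y)
    _ ≤ p * w z := secrecy z

end DecodingRegion

theorem necessity_column_substochastic_general {𝕜 α β γ : Type*}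
    [Field 𝕜] [LinearOrder 𝕜] [IsStrictOrderedRing 𝕜] [Fintype α] [Fintype β] [Fintype γ]
    {P : α × β → 𝕜} (hPX : ∀ x, 0 < ∑ y, P (x, y))
    {Q : α × β × γ → 𝕜} (hQ0 : ∀ x y z, 0 ≤ Q (x, y, z)) (hQ1 : ∑ x, ∑ y, ∑ z, Q (x, y, z) = 1)
    (consistent : ∀ x y, ∑ z, Q (x, y, z) = P (x, y))
    (secrecy : ∀ x z, ∑ y, Q (x, y, z) = (∑ y, P (x, y)) * ∑ x', ∑ y, Q (x', y, z))
    {y : β} (informative : ∀ z x x', 0 < Q (x, y, z) → 0 < Q (x', y, z) → x = x') :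
    ∑ x, P (x, y) / ∑ y', P (x, y') ≤ 1 := by
  have conditional_le (x : α) : P (x, y) / ∑ y', P (x, y') ≤
      ∑ z ∈ decodingRegion Q y x, ∑ x', ∑ y', Q (x', y', z) := by
    rw [← consistent x y]
    exact sum_div_le_sum_decodingRegion (hQ0 x) (hPX x) (fun z => (secrecy x z).le) y
  have signal_nonneg (z : γ) : 0 ≤ ∑ x, ∑ y', Q (x, y', z) :=
    sum_nonneg fun x _ => sum_nonneg fun y' _ => hQ0 x y' z
  calc ∑ x, P (x, y) / ∑ y', P (x, y')
      ≤ ∑ x, ∑ z ∈ decodingRegion Q y x, ∑ x', ∑ y', Q (x', y', z) :=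
        sum_le_sum fun x _ => conditional_le x
    _ ≤ ∑ z, ∑ x', ∑ y', Q (x', y', z) :=
        sum_sum_le_sum_univ_of_pairwise_disjoint
          (pairwise_disjoint_decodingRegion informative) signal_nonneg
    _ = ∑ x', ∑ y', ∑ z, Q (x', y', z) :=
        sum_comm.trans (sum_congr rfl fun _ _ => sum_comm)
    _ = 1 := hQ1

/-- (Necessity) If there is a finite public-signal type `γ` and a joint
distribution `Q` satisfying consistency, informativeness, and perfect
secrecy, then the matrix of conditionals `P_{Y|X}` is column-substochastic. -/
theorem necessity_column_substochastic
    {α β : Type} [Fintype α] [Fintype β] [Nonempty α] [Nonempty β]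
    (P : α × β → ℝ)
    (hP0 : ∀ x y, 0 ≤ P (x, y))
    (hP1 : ∑ x : α, ∑ y : β, P (x, y) = 1)
    (hPX : ∀ x : α, 0 < ∑ y : β, P (x, y))
    (h : ∃ (γ : Type) (_ : Fintype γ) (Q : α × β × γ → ℝ),
      (∀ x y z, 0 ≤ Q (x, y, z)) ∧
      (∑ x : α, ∑ y : β, ∑ z : γ, Q (x, y, z)) = 1 ∧
      -- consistency
      (∀ x y, ∑ z : γ, Q (x, y, z) = P (x, y)) ∧
      -- informativeness
      (∀ (y : β) (z : γ) (x x' : α),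
        0 < Q (x, y, z) → 0 < Q (x', y, z) → x = x') ∧
      -- perfect secrecy
      (∀ (x : α) (z : γ), ∑ y : β, Q (x, y, z) =
        (∑ y : β, P (x, y)) * (∑ x' : α, ∑ y : β, Q (x', y, z)))) :
    ∀ y : β, ∑ x : α, P (x, y) / (∑ y' : β, P (x, y')) ≤ 1 := by
  obtain ⟨γ, _, Q, hQ0, hQ1, consistent, informative, secrecy⟩ := h
  exact fun y =>
    necessity_column_substochastic_general hPX hQ0 hQ1 consistent secrecy (informative y)
end

section
/- (Sufficiency) If for every y ∈ β one has ∑_{x ∈ α} P(x,y)/P_X(x) ≤ 1, then there exist a finite type γ and a joint distribution Q : α × β × γ → ℝ (nonnegative, summing to 1) satisfying consistency, informativeness, and perfect secrecy. -/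
/-!
Write `W x y = P(x, y) / P_X(x)` for the conditional distribution of `Y` given `X`. Its rows sum to
`1` and its columns to at most `1`, so `[[0, W], [Wᵀ, D]]` is doubly stochastic for the diagonal
matrix `D` of column deficits. In a Birkhoff decomposition of this matrix, the zero block forces
each permutation of positive weight to send `α` into `β`; hence `W` is a mixture of matrices of
injections `f_z : α → β`. Draw `Z` from the mixing weights, independently of `X`, and let
`Y = f_Z(X)`: injectivity of `f_z` makes `X` recoverable from `(Y, Z)`.
-/

open Finset Function Matrix

section InjectionMatrices

variable {R α β : Type*}

/-- The `0`-`1` matrix of a function `f : α → β`, whose row `x` is the indicator of `f x`; as a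
conditional distribution, it describes `Y = f X`. -/
def functionMatrix (R : Type*) [Zero R] [One R] [DecidableEq β] (f : α → β) : Matrix α β R :=
  (1 : Matrix β β R).submatrix f id

lemma functionMatrix_apply [Zero R] [One R] [DecidableEq β] (f : α → β) (x : α) (y : β) :
    functionMatrix R f x y = if f x = y then 1 else 0 :=
  one_apply

lemma exists_injective_functionMatrix_eq_toBlocks₁₂ [Semiring R] [Nontrivial R] [DecidableEq α]
    [DecidableEq β] {σ : Equiv.Perm (α ⊕ β)} (hσ : (σ.permMatrix R).toBlocks₁₁ = 0) :
    ∃ f : α → β, Injective f ∧ functionMatrix R f = (σ.permMatrix R).toBlocks₁₂ := by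
  have maps_inl_to_inr : ∀ x, ∃ y, σ (Sum.inl x) = Sum.inr y := by
    intro x
    rcases hx : σ (Sum.inl x) with x' | y
    · have entry_eq_zero := congrFun₂ hσ x x'
      simp [toBlocks₁₁, Equiv.toPEquiv_apply, hx] at entry_eq_zero
    · exact ⟨y, rfl⟩
  choose f hf using maps_inl_to_inr
  refine ⟨f, fun x x' hxx' => ?_, ?_⟩
  · exact Sum.inl_injective (σ.injective (by rw [hf, hf, hxx']))
  · ext x y
    simp [functionMatrix_apply, toBlocks₁₂, Equiv.toPEquiv_apply, hf]

end InjectionMatrices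

section RectangularBirkhoff

variable {R α β : Type*} [Fintype α] [Fintype β] [DecidableEq β]

/-- The square matrix `[[0, W], [Wᵀ, D]]`, where the diagonal matrix `D` holds the amounts by which
the column sums of `W` fall short of `1`. It completes a row-stochastic, column-substochastic `W` to
a doubly stochastic matrix. -/
def stochasticCompletion [Ring R] (W : Matrix α β R) : Matrix (α ⊕ β) (α ⊕ β) R :=
  fromBlocks 0 W Wᵀ (diagonal fun y => 1 - ∑ x, W x y)

lemma stochasticCompletion_mem_doublyStochastic [DecidableEq α] [Ring R] [PartialOrder R]
    [IsOrderedRing R] {W : Matrix α β R} (nonneg : ∀ x y, 0 ≤ W x y)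
    (row_sum : ∀ x, ∑ y, W x y = 1) (col_sum : ∀ y, ∑ x, W x y ≤ 1) :
    stochasticCompletion W ∈ doublyStochastic R (α ⊕ β) := by
  rw [mem_doublyStochastic_iff_sum]
  refine ⟨?_, ?_, ?_⟩
  · rintro (x | y) (x' | y')
    · exact le_rfl
    · exact nonneg x y'
    · exact nonneg x' y
    · rw [stochasticCompletion, fromBlocks_apply₂₂, diagonal_apply]
      split_ifs
      · exact sub_nonneg.2 (col_sum y)
      · exact le_rfl
  · rintro (x | y) <;> simp [stochasticCompletion, diagonal_apply, row_sum]
  · rintro (x | y) <;> simp [stochasticCompletion, diagonal_apply, row_sum]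

variable [Field R] [LinearOrder R] [IsStrictOrderedRing R]

lemma toBlocks₁₂_mem_convexHull_functionMatrix [DecidableEq α] {M : Matrix (α ⊕ β) (α ⊕ β) R}
    (hM : M ∈ doublyStochastic R (α ⊕ β)) (hM₁₁ : M.toBlocks₁₁ = 0) :
    M.toBlocks₁₂ ∈ convexHull R (functionMatrix R '' {f : α → β | Injective f}) := by
  obtain ⟨w, w_nonneg, w_sum, rfl⟩ := exists_eq_sum_perm_of_mem_doublyStochastic hM
  have block_eq_zero : ∀ σ, w σ ≠ 0 → (σ.permMatrix R).toBlocks₁₁ = 0 := by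
    intro σ hσ
    ext x x'
    have entry_nonneg : ∀ τ ∈ univ, 0 ≤ w τ * τ.permMatrix R (Sum.inl x) (Sum.inl x') :=
      fun τ _ => mul_nonneg (w_nonneg τ)
        (nonneg_of_mem_doublyStochastic permMatrix_mem_doublyStochastic)
    have entry_sum : ∑ τ, w τ * τ.permMatrix R (Sum.inl x) (Sum.inl x') = 0 := by
      simpa only [toBlocks₁₁, of_apply, Matrix.sum_apply, Matrix.smul_apply, smul_eq_mul,
        Matrix.zero_apply] using congrFun₂ hM₁₁ x x'
    have entry_eq_zero := (sum_eq_zero_iff_of_nonneg entry_nonneg).1 entry_sum σ (mem_univ σ)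
    exact (mul_eq_zero.1 entry_eq_zero).resolve_left hσ
  have block_sum : (∑ σ, w σ • σ.permMatrix R).toBlocks₁₂ =
      ∑ᶠ σ, w σ • (σ.permMatrix R).toBlocks₁₂ := by
    rw [finsum_eq_sum_of_fintype]
    ext x y
    simp only [toBlocks₁₂, of_apply, Matrix.sum_apply, Matrix.smul_apply]
  rw [block_sum]
  refine (convex_convexHull R _).finsum_mem w_nonneg (by rwa [finsum_eq_sum_of_fintype]) ?_
  exact fun σ hσ => subset_convexHull R _
    (exists_injective_functionMatrix_eq_toBlocks₁₂ (block_eq_zero σ hσ))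

theorem mem_convexHull_functionMatrix_injective {W : Matrix α β R} (nonneg : ∀ x y, 0 ≤ W x y)
    (row_sum : ∀ x, ∑ y, W x y = 1) (col_sum : ∀ y, ∑ x, W x y ≤ 1) :
    W ∈ convexHull R (functionMatrix R '' {f : α → β | Injective f}) := by
  classical
  exact toBlocks₁₂_mem_convexHull_functionMatrix
    (stochasticCompletion_mem_doublyStochastic nonneg row_sum col_sum) rfl

theorem exists_injective_mixture {W : Matrix α β R} (nonneg : ∀ x y, 0 ≤ W x y)
    (row_sum : ∀ x, ∑ y, W x y = 1) (col_sum : ∀ y, ∑ x, W x y ≤ 1) :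
    ∃ (γ : Type) (_ : Fintype γ) (w : γ → R) (f : γ → α → β),
      (∀ z, 0 ≤ w z) ∧ ∑ z, w z = 1 ∧ (∀ z, Injective (f z)) ∧
        ∑ z, w z • functionMatrix R (f z) = W := by
  have W_mem := mem_convexHull_functionMatrix_injective nonneg row_sum col_sum
  rw [mem_convexHull_iff_exists_fintype] at W_mem
  obtain ⟨γ, _, w, A, w_nonneg, w_sum, hA, mixture⟩ := W_mem
  choose f f_injective hf using hA
  simp only [← hf] at mixture
  exact ⟨γ, inferInstance, w, f, w_nonneg, w_sum, f_injective, mixture⟩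

end RectangularBirkhoff

section SignalJoint

variable {R α β γ : Type*} [DecidableEq β] [CommSemiring R]
  {p : α → R} {w : γ → R} {f : γ → α → β}

/-- The joint law of `(X, Y, Z)` when `X` has law `p`, the public signal `Z` has law `w` and is
independent of `X`, and `Y = f Z X`. -/
def signalJoint (p : α → R) (w : γ → R) (f : γ → α → β) : α × β × γ → R :=
  fun (x, y, z) => p x * (w z * functionMatrix R (f z) x y)

lemma signalJoint_nonneg [PartialOrder R] [IsOrderedRing R] (hp : ∀ x, 0 ≤ p x)
    (hw : ∀ z, 0 ≤ w z) (t : α × β × γ) : 0 ≤ signalJoint p w f t := by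
  refine mul_nonneg (hp _) (mul_nonneg (hw _) ?_)
  rw [functionMatrix_apply]
  split_ifs
  · exact zero_le_one
  · exact le_rfl

lemma apply_eq_of_signalJoint_ne_zero {x : α} {y : β} {z : γ}
    (h : signalJoint p w f (x, y, z) ≠ 0) : f z x = y := by
  by_contra hne
  simp [signalJoint, functionMatrix_apply, hne] at h

lemma sum_signalJoint_outcome [Fintype β] (p : α → R) (w : γ → R) (f : γ → α → β) (x : α) (z : γ) :
    ∑ y, signalJoint p w f (x, y, z) = p x * w z := by
  simp [signalJoint, functionMatrix_apply]

lemma sum_signalJoint_signal [Fintype γ] (p : α → R) (w : γ → R) (f : γ → α → β) (x : α) (y : β) :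
    ∑ z, signalJoint p w f (x, y, z) = p x * (∑ z, w z • functionMatrix R (f z)) x y := by
  simp only [signalJoint, Matrix.sum_apply, Matrix.smul_apply, smul_eq_mul, mul_sum]

end SignalJoint

theorem sufficiency_column_substochastic_general
    {R α β : Type*} [Field R] [LinearOrder R] [IsStrictOrderedRing R] [Fintype α] [Fintype β]
    (P : α × β → R)
    (hP0 : ∀ x y, 0 ≤ P (x, y))
    (hP1 : ∑ x : α, ∑ y : β, P (x, y) = 1)
    (hPX : ∀ x : α, 0 < ∑ y : β, P (x, y))
    (h : ∀ y : β, ∑ x : α, P (x, y) / (∑ y' : β, P (x, y')) ≤ 1) :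
    ∃ (γ : Type) (_ : Fintype γ) (Q : α × β × γ → R),
      (∀ x y z, 0 ≤ Q (x, y, z)) ∧
      (∑ x : α, ∑ y : β, ∑ z : γ, Q (x, y, z)) = 1 ∧
      (∀ x y, ∑ z : γ, Q (x, y, z) = P (x, y)) ∧
      (∀ (y : β) (z : γ) (x x' : α),
        0 < Q (x, y, z) → 0 < Q (x', y, z) → x = x') ∧
      (∀ (x : α) (z : γ), ∑ y : β, Q (x, y, z) =
        (∑ y : β, P (x, y)) * (∑ x' : α, ∑ y : β, Q (x', y, z))) := by
  classical
  set p : α → R := fun x => ∑ y, P (x, y)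
  let W : Matrix α β R := Matrix.of fun x y => P (x, y) / p x
  have W_nonneg : ∀ x y, 0 ≤ W x y := fun x y => div_nonneg (hP0 x y) (hPX x).le
  have W_row_sum : ∀ x, ∑ y, W x y = 1 := fun x => by
    simpa only [W, of_apply, ← sum_div] using div_self (hPX x).ne'
  obtain ⟨γ, _, w, f, w_nonneg, _, f_injective, mixture⟩ :=
    exists_injective_mixture W_nonneg W_row_sum h
  have consistent : ∀ x y, ∑ z, signalJoint p w f (x, y, z) = P (x, y) := fun x y => by
    rw [sum_signalJoint_signal, mixture]
    exact mul_div_cancel₀ _ (hPX x).ne'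
  refine ⟨γ, inferInstance, signalJoint p w f, fun x y z => ?_, ?_, consistent, ?_, fun x z => ?_⟩
  · exact signalJoint_nonneg (fun x => (hPX x).le) w_nonneg _
  · simpa only [consistent] using hP1
  · intro y z x x' hx hx'
    exact f_injective z ((apply_eq_of_signalJoint_ne_zero hx.ne').trans
      (apply_eq_of_signalJoint_ne_zero hx'.ne').symm)
  · simp only [sum_signalJoint_outcome, ← sum_mul]
    rw [hP1, one_mul]

/-- (Sufficiency) If the matrix of conditionals `P_{Y|X}` is
column-substochastic, then there is a finite public-signal type `γ` and a
joint distribution `Q` satisfying consistency, informativeness, and perfect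
secrecy. -/
theorem sufficiency_column_substochastic
    {α β : Type} [Fintype α] [Fintype β] [Nonempty α] [Nonempty β]
    (P : α × β → ℝ)
    (hP0 : ∀ x y, 0 ≤ P (x, y))
    (hP1 : ∑ x : α, ∑ y : β, P (x, y) = 1)
    (hPX : ∀ x : α, 0 < ∑ y : β, P (x, y))
    (h : ∀ y : β, ∑ x : α, P (x, y) / (∑ y' : β, P (x, y')) ≤ 1) :
    ∃ (γ : Type) (_ : Fintype γ) (Q : α × β × γ → ℝ),
      (∀ x y z, 0 ≤ Q (x, y, z)) ∧
      (∑ x : α, ∑ y : β, ∑ z : γ, Q (x, y, z)) = 1 ∧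
      -- consistency
      (∀ x y, ∑ z : γ, Q (x, y, z) = P (x, y)) ∧
      -- informativeness
      (∀ (y : β) (z : γ) (x x' : α),
        0 < Q (x, y, z) → 0 < Q (x', y, z) → x = x') ∧
      -- perfect secrecy
      (∀ (x : α) (z : γ), ∑ y : β, Q (x, y, z) =
        (∑ y : β, P (x, y)) * (∑ x' : α, ∑ y : β, Q (x', y, z))) :=
  sufficiency_column_substochastic_general P hP0 hP1 hPX h
end

section
/- Let M be an n × m real matrix with nonnegative entries that is row-stochastic and column-substochastic, and suppose n < m. Define the row vector r = (1_m^T − 1_n^T M)/(m − n), where 1_m and 1_n are all-ones vectors, and let M_ext be the m × m matrix obtained by appending m − n copies of r as additional rows to M. Then all entries of M_ext are nonnegative, and M_ext is doubly stochastic: every row and every column of M_ext sums to 1. -/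
/-!
The row `r` is the column deficit `1ᵀ - 1ᵀ M` shared equally among the `m - n` new rows. It is
nonnegative because no column of `M` exceeds `1`, its copies fill each column up to `1`, and
its own entries sum to `1` because the total deficit is `m - n`: the matrix `M` has total mass `n`.
-/

open Fintype Matrix

section DeficitRow

variable {K ι ρ κ : Type*} [Field K] [Fintype ι] [Fintype κ]

/-- The row `(1ᵀ - 1ᵀ M) / (|κ| - |ι|)`, the equal share of the column deficits of `M` that each of
`|κ| - |ι|` additional rows has to carry. It is `0` by the convention `x / 0 = 0` when
`|ι| = |κ|`. -/
def deficitRow (M : Matrix ι κ K) : κ → K :=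
  fun j ↦ (1 - ∑ i, M i j) / ((card κ : K) - card ι)

theorem sum_deficitRow [CharZero K] {M : Matrix ι κ K} (hcard : card ι ≠ card κ)
    (hrow : ∀ i, ∑ j, M i j = 1) : ∑ j, deficitRow M j = 1 := by
  have hne : (card κ : K) - card ι ≠ 0 := sub_ne_zero.2 (Nat.cast_injective.ne hcard.symm)
  have total_mass : ∑ j, ∑ i, M i j = (card ι : K) := by
    rw [Finset.sum_comm]
    simp [hrow]
  calc ∑ j, deficitRow M j
      = (∑ j, (1 - ∑ i, M i j)) / ((card κ : K) - card ι) := (Finset.sum_div ..).symm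
    _ = ((card κ : K) - card ι) / ((card κ : K) - card ι) := by
      simp [Finset.sum_sub_distrib, total_mass]
    _ = 1 := div_self hne

theorem sum_row_fromRows_deficitRow [CharZero K] {M : Matrix ι κ K} (hcard : card ι ≠ card κ)
    (hrow : ∀ i, ∑ j, M i j = 1) (i : ι ⊕ ρ) :
    ∑ j, fromRows M (replicateRow ρ (deficitRow M)) i j = 1 := by
  rcases i with i | _
  · exact hrow i
  · exact sum_deficitRow hcard hrow

theorem sum_col_fromRows_deficitRow [CharZero K] [Fintype ρ] [Nonempty ρ] (M : Matrix ι κ K)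
    (hcard : card ι + card ρ = card κ) (j : κ) :
    ∑ i, fromRows M (replicateRow ρ (deficitRow M)) i j = 1 := by
  have hρ : (card κ : K) - card ι = card ρ := by simp [← hcard]
  have hne : (card ρ : K) ≠ 0 := Nat.cast_ne_zero.2 card_ne_zero
  calc ∑ i, fromRows M (replicateRow ρ (deficitRow M)) i j
      = ∑ i, M i j + card ρ * deficitRow M j := by simp [sum_sum_type]
    _ = ∑ i, M i j + (1 - ∑ i, M i j) := by rw [deficitRow, hρ, mul_div_cancel₀ _ hne]
    _ = 1 := add_sub_cancel _ _

variable [LinearOrder K] [IsStrictOrderedRing K] {M : Matrix ι κ K}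

theorem deficitRow_nonneg (hcard : card ι ≤ card κ) (hcol : ∀ j, ∑ i, M i j ≤ 1) (j : κ) :
    0 ≤ deficitRow M j :=
  div_nonneg (sub_nonneg.2 (hcol j)) (sub_nonneg.2 (Nat.cast_le.2 hcard))

theorem fromRows_deficitRow_nonneg (hcard : card ι ≤ card κ) (hM : ∀ i j, 0 ≤ M i j)
    (hcol : ∀ j, ∑ i, M i j ≤ 1) (i : ι ⊕ ρ) (j : κ) :
    0 ≤ fromRows M (replicateRow ρ (deficitRow M)) i j := by
  rcases i with i | _
  · exact hM i j
  · exact deficitRow_nonneg hcard hcol j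

theorem extension_doubly_stochastic_general [Nonempty ρ] [DecidableEq κ]
    (e : ι ⊕ ρ ≃ κ) (hM : ∀ i j, 0 ≤ M i j) (hrow : ∀ i, ∑ j, M i j = 1)
    (hcol : ∀ j, ∑ i, M i j ≤ 1) :
    (fromRows M (replicateRow ρ (deficitRow M))).submatrix e.symm id ∈ doublyStochastic K κ := by
  have : Fintype ρ := .ofInjective (e ∘ Sum.inr) (e.injective.comp Sum.inr_injective)
  have hcard : card ι + card ρ = card κ := card_sum.symm.trans (card_congr e)
  have hlt : card ι < card κ := hcard ▸ Nat.lt_add_of_pos_right card_pos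
  exact mem_doublyStochastic_iff_sum.2
    ⟨fun i ↦ fromRows_deficitRow_nonneg hlt.le hM hcol (e.symm i),
      fun i ↦ sum_row_fromRows_deficitRow hlt.ne hrow (e.symm i),
      fun j ↦ (e.symm.sum_comp _).trans (sum_col_fromRows_deficitRow M hcard j)⟩

end DeficitRow

theorem fromRows_replicateRow_submatrix_finSumFinEquiv_symm {α κ : Type*} {n k : ℕ}
    (M : Matrix (Fin n) κ α) (r : κ → α) :
    (fromRows M (replicateRow (Fin k) r)).submatrix finSumFinEquiv.symm id =
      fun (i : Fin (n + k)) j ↦ if h : (i : ℕ) < n then M ⟨i, h⟩ j else r j := by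
  ext i j
  cases i using Fin.addCases <;> simp

/-- Extending a row-stochastic, column-substochastic `n × m` matrix (with
`n < m`) by `m - n` copies of the row `r = (1ₘᵀ − 1ₙᵀ M)/(m − n)` yields a
doubly stochastic `m × m` matrix. -/
theorem extension_doubly_stochastic
    {n m : ℕ} (hnm : n < m) (M : Matrix (Fin n) (Fin m) ℝ)
    (hM0 : ∀ i j, 0 ≤ M i j)
    (hrow : ∀ i, ∑ j : Fin m, M i j = 1)
    (hcol : ∀ j, ∑ i : Fin n, M i j ≤ 1) :
    ∀ (r : Fin m → ℝ), r = (fun j => (1 - ∑ i : Fin n, M i j) / ((m : ℝ) - n)) →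
    ∀ (Mext : Matrix (Fin m) (Fin m) ℝ),
      Mext = (fun (i j : Fin m) => if h : (i : ℕ) < n then M ⟨i, h⟩ j else r j) →
    (∀ i j, 0 ≤ Mext i j) ∧
    (∀ i, ∑ j : Fin m, Mext i j = 1) ∧
    (∀ j, ∑ i : Fin m, Mext i j = 1) := by
  rintro r rfl Mext rfl
  obtain ⟨k, rfl⟩ := Nat.exists_eq_add_of_le hnm.le
  have : NeZero k := ⟨by lia⟩
  simpa only [fromRows_replicateRow_submatrix_finSumFinEquiv_symm, deficitRow, card_fin] using
    mem_doublyStochastic_iff_sum.1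
      (extension_doubly_stochastic_general (finSumFinEquiv (n := k)) hM0 hrow hcol)
end

section
/- (Perfect secrecy of the Birkhoff construction) Suppose f : β → Fin m is a bijection, e : α → Fin m is an injection, α_1, …, α_p > 0 sum to 1, each σ_k is a permutation of Fin m with associated permutation matrix Π^{(k)} (Π^{(k)}_{ij} = 1 if σ_k(i) = j and 0 otherwise), and p_X : α → ℝ is a probability vector (nonnegative, summing to 1). Define Q : α × β × Fin p → ℝ by Q(x, y, k) = α_k · p_X(x) · Π^{(k)}_{e(x), f(y)}. Then for every x ∈ α and k ∈ Fin p, the marginal Q_XZ(x,k) := ∑_y Q(x,y,k) equals α_k · p_X(x), which equals Q_Z(k) · p_X(x) where Q_Z(k) := ∑_{x,y} Q(x,y,k); that is, X and Z are independent under Q. -/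
theorem sum_ite_eq_apply_of_bijective {β γ R : Type*} [Fintype β] [DecidableEq γ]
    [AddCommMonoidWithOne R] {f : β → γ} (hf : Function.Bijective f) (j : γ) :
    ∑ y, (if j = f y then (1 : R) else 0) = 1 := by
  classical
  obtain ⟨y, rfl⟩ := hf.surjective j
  simp only [hf.injective.eq_iff, Finset.sum_ite_eq, Finset.mem_univ, if_true]

section KeyedChannel

variable {α β κ R : Type*} [NonAssocSemiring R]

/-- The joint law of a message `x`, a ciphertext `y` and a key `k` when messages have law `pX`,
keys have law `a`, and encryption under the key `k` is the channel `W k`, whose entry `W k x y` is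
the probability of sending `x` to `y`. All laws are encoded as weight functions, and none of them
is required to be normalized. -/
def keyedChannelLaw (a : κ → R) (pX : α → R) (W : κ → α → β → R) (q : α × β × κ) : R :=
  a q.2.2 * pX q.1 * W q.2.2 q.1 q.2.1

variable [Fintype β] {pX : α → R} {W : κ → α → β → R} {k : κ}

theorem sum_keyedChannelLaw (a : κ → R) (pX : α → R) {x : α} (hW : ∑ y, W k x y = 1) :
    ∑ y, keyedChannelLaw a pX W (x, y, k) = a k * pX x := by
  simp only [keyedChannelLaw]
  rw [← Finset.mul_sum, hW, mul_one]

theorem sum_sum_keyedChannelLaw [Fintype α] (a : κ → R) (hpX : ∑ x, pX x = 1)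
    (hW : ∀ x, ∑ y, W k x y = 1) :
    ∑ x, ∑ y, keyedChannelLaw a pX W (x, y, k) = a k := by
  simp only [sum_keyedChannelLaw a pX (hW _)]
  rw [← Finset.mul_sum, hpX, mul_one]

theorem birkhoff_construction_perfect_secrecy_general [Fintype α] (a : κ → R)
    (hpX : ∑ x, pX x = 1) (hW : ∀ x, ∑ y, W k x y = 1) (x : α) :
    ∑ y, keyedChannelLaw a pX W (x, y, k) = a k * pX x ∧
      a k * pX x = (∑ x', ∑ y, keyedChannelLaw a pX W (x', y, k)) * pX x :=
  ⟨sum_keyedChannelLaw a pX (hW x), by rw [sum_sum_keyedChannelLaw a hpX hW]⟩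

end KeyedChannel

/-- (Perfect secrecy of the Birkhoff construction) For the constructed
`Q(x,y,k) = αₖ · p_X(x) · Π⁽ᵏ⁾_{e(x),f(y)}`, the `XZ`-marginal factorizes:
`Q_XZ(x,k) = αₖ · p_X(x) = Q_Z(k) · p_X(x)`, i.e. `X` and `Z` are
independent. -/
theorem birkhoff_construction_perfect_secrecy
    {α β : Type} [Fintype α] [Fintype β] [Nonempty α] [Nonempty β]
    {m p : ℕ}
    (pX : α → ℝ) (hpX0 : ∀ x, 0 ≤ pX x) (hpX1 : ∑ x : α, pX x = 1)
    (a : Fin p → ℝ) (ha : ∀ k, 0 < a k) (hasum : ∑ k : Fin p, a k = 1)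
    (σ : Fin p → Equiv.Perm (Fin m))
    (e : α → Fin m) (he : Function.Injective e)
    (f : β → Fin m) (hf : Function.Bijective f) :
    ∀ (Q : α × β × Fin p → ℝ),
      Q = (fun q =>
        a q.2.2 * pX q.1 *
          (if σ q.2.2 (e q.1) = f q.2.1 then (1 : ℝ) else 0)) →
    ∀ (x : α) (k : Fin p),
      (∑ y : β, Q (x, y, k)) = a k * pX x ∧
      a k * pX x = (∑ x' : α, ∑ y : β, Q (x', y, k)) * pX x := by
  rintro _ rfl x k
  exact birkhoff_construction_perfect_secrecy_general
    (W := fun k x y => if σ k (e x) = f y then 1 else 0) a hpX1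
    (fun x => sum_ite_eq_apply_of_bijective hf (σ k (e x))) x
end

section
/- (Lower bound on revealing-signal probability) Let γ be a finite type and Q : α × β × γ → ℝ a nonnegative function summing to 1 that satisfies consistency (∑_z Q(x,y,z) = P(x,y) for all x,y) and perfect secrecy (Q_XZ(x,z) = P_X(x)·Q_Z(z) for all x,z, where Q_XZ(x,z) = ∑_y Q(x,y,z) and Q_Z(z) = ∑_{x,y} Q(x,y,z)). For x ∈ α, y ∈ β define φ(x,y) = { z ∈ γ : Q(x,y,z) > 0 }. Then for every x ∈ α and y ∈ β, P(x,y)/P_X(x) ≤ ∑_{z ∈ φ(x,y)} Q_Z(z). -/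
section OrderedSemifield

variable {K : Type*} [Semifield K] [LinearOrder K] [IsStrictOrderedRing K]

theorem sum_div_le_sum_filter_pos {ι : Type*} (s : Finset ι) {f w : ι → K} {c : K}
    (hc : 0 < c) (hfw : ∀ i ∈ s, 0 < f i → f i ≤ c * w i) :
    (∑ i ∈ s, f i) / c ≤ ∑ i ∈ s with 0 < f i, w i := by
  rw [div_le_iff₀' hc]
  calc ∑ i ∈ s, f i
      ≤ ∑ i ∈ s with 0 < f i, f i :=
        Finset.sum_le_sum_of_subset_of_nonpos' (Finset.filter_subset _ s) fun i hi hi_notMem ↦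
          not_lt.mp fun h ↦ hi_notMem (Finset.mem_filter.mpr ⟨hi, h⟩)
    _ ≤ ∑ i ∈ s with 0 < f i, c * w i :=
        Finset.sum_le_sum fun i hi ↦
          hfw i (Finset.mem_filter.mp hi).1 (Finset.mem_filter.mp hi).2
    _ = c * ∑ i ∈ s with 0 < f i, w i := (Finset.mul_sum _ _ _).symm

theorem revealing_signal_probability_lower_bound_general {α β γ : Type*}
    [Fintype α] [Fintype β] [Fintype γ] {P : α × β → K} {Q : α × β × γ → K} {x : α}
    (hPX : 0 < ∑ y : β, P (x, y))
    (hQ0 : ∀ y z, 0 ≤ Q (x, y, z))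
    (hcons : ∀ y, ∑ z : γ, Q (x, y, z) = P (x, y))
    (hsecr : ∀ z : γ, ∑ y : β, Q (x, y, z) ≤
      (∑ y : β, P (x, y)) * (∑ x' : α, ∑ y : β, Q (x', y, z)))
    (y : β) :
    P (x, y) / (∑ y' : β, P (x, y')) ≤
      ∑ z with 0 < Q (x, y, z), ∑ x' : α, ∑ y' : β, Q (x', y', z) := by
  rw [← hcons y]
  refine sum_div_le_sum_filter_pos Finset.univ hPX fun z _ _ ↦ ?_
  calc Q (x, y, z)
      ≤ ∑ y' : β, Q (x, y', z) :=
        Finset.single_le_sum (f := fun y' ↦ Q (x, y', z)) (fun y' _ ↦ hQ0 y' z)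
          (Finset.mem_univ y)
    _ ≤ (∑ y' : β, P (x, y')) * ∑ x' : α, ∑ y' : β, Q (x', y', z) := hsecr z

end OrderedSemifield

/-- (Lower bound on revealing-signal probability) Under consistency and
perfect secrecy, the signals revealing `x` when combined with `y` have
total probability at least `P(x,y)/P_X(x)`. -/
theorem revealing_signal_probability_lower_bound
    {α β : Type} [Fintype α] [Fintype β] [Nonempty α] [Nonempty β]
    (P : α × β → ℝ)
    (hP0 : ∀ x y, 0 ≤ P (x, y))
    (hP1 : ∑ x : α, ∑ y : β, P (x, y) = 1)
    (hPX : ∀ x : α, 0 < ∑ y : β, P (x, y))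
    {γ : Type} [Fintype γ]
    (Q : α × β × γ → ℝ)
    (hQ0 : ∀ x y z, 0 ≤ Q (x, y, z))
    (hQ1 : ∑ x : α, ∑ y : β, ∑ z : γ, Q (x, y, z) = 1)
    -- consistency
    (hcons : ∀ x y, ∑ z : γ, Q (x, y, z) = P (x, y))
    -- perfect secrecy
    (hsecr : ∀ (x : α) (z : γ), ∑ y : β, Q (x, y, z) =
      (∑ y : β, P (x, y)) * (∑ x' : α, ∑ y : β, Q (x', y, z))) :
    ∀ (x : α) (y : β),
      P (x, y) / (∑ y' : β, P (x, y')) ≤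
        ∑ z ∈ Finset.univ.filter (fun z : γ => 0 < Q (x, y, z)),
          (∑ x' : α, ∑ y' : β, Q (x', y', z)) :=
  fun x ↦ revealing_signal_probability_lower_bound_general (hPX x) (hQ0 x) (hcons x)
    fun z ↦ (hsecr x z).le
end

section
/- (Shannon's perfect secrecy theorem) Suppose the joint distribution P : α × β → ℝ satisfies P(x,y) = P_X(x)/m for all x ∈ α, y ∈ β, where m is the cardinality of β (i.e., Y is uniform on β and independent of X). Then there exist a finite type γ and a joint distribution Q : α × β × γ → ℝ (nonnegative, summing to 1) satisfying consistency, informativeness, and perfect secrecy if and only if the cardinality of α is at most the cardinality of β. -/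
/-!
Fix a signal `z` of positive probability. Under perfect secrecy every message `x` remains possible
given `z`, so some key `y` is compatible with `(x, z)`; informativeness makes the choice of such a
key injective in `x`, whence `#α ≤ #β`. Conversely, if `#α ≤ #β`, embed `α` into a cyclic group of
order `#β` and use the one-time pad: the signal is the sum of `x` and the uniform key `y`.
-/

section PerfectSecrecy

variable {α β γ 𝕜 : Type*}

/-- The public signal is *consistent* with the joint distribution `P` of message and key: the
distribution `Q` of message, key and signal has `P` as its marginal. -/
def IsConsistent [Fintype γ] [AddCommMonoid 𝕜] (P : α × β → 𝕜) (Q : α × β × γ → 𝕜) : Prop :=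
  ∀ x y, ∑ z, Q (x, y, z) = P (x, y)

/-- The public signal is *informative*: together with the key it determines the message. -/
def IsInformative [Zero 𝕜] [LT 𝕜] (Q : α × β × γ → 𝕜) : Prop :=
  ∀ y z x x', 0 < Q (x, y, z) → 0 < Q (x', y, z) → x = x'

/-- *Perfect secrecy*: the public signal is independent of the message. The law `p` of the message
is an argument of its own rather than being computed from `Q`. -/
def IsPerfectlySecret [Fintype α] [Fintype β] [Semiring 𝕜] (p : α → 𝕜) (Q : α × β × γ → 𝕜) : Prop :=
  ∀ x z, ∑ y, Q (x, y, z) = p x * ∑ x', ∑ y, Q (x', y, z)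

section Necessity

theorem exists_pos_of_sum_pos {ι : Type*} [Fintype ι] [AddCommMonoid 𝕜] [LinearOrder 𝕜]
    [IsOrderedAddMonoid 𝕜] {f : ι → 𝕜} (hf : 0 < ∑ i, f i) : ∃ i, 0 < f i := by
  contrapose! hf
  exact Fintype.sum_nonpos hf

theorem IsInformative.card_le_of_forall_exists_key_pos [Fintype α] [Fintype β] [Zero 𝕜] [LT 𝕜]
    {Q : α × β × γ → 𝕜} (hinf : IsInformative Q) {z : γ} (hkey : ∀ x, ∃ y, 0 < Q (x, y, z)) :
    Fintype.card α ≤ Fintype.card β := by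
  choose key hpos using hkey
  exact Fintype.card_le_of_injective key fun x x' h ↦
    hinf (key x) z x x' (hpos x) (h ▸ hpos x')

variable [Fintype α] [Fintype β] [Semiring 𝕜] [LinearOrder 𝕜] [IsStrictOrderedRing 𝕜]
  {p : α → 𝕜} {Q : α × β × γ → 𝕜}

theorem IsPerfectlySecret.exists_key_pos (hsecret : IsPerfectlySecret p Q) {x : α} {z : γ}
    (hx : 0 < p x) (hz : 0 < ∑ x', ∑ y, Q (x', y, z)) : ∃ y, 0 < Q (x, y, z) :=
  exists_pos_of_sum_pos (hsecret x z ▸ mul_pos hx hz)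

theorem IsInformative.card_le_of_isPerfectlySecret [Fintype γ] (hinf : IsInformative Q)
    (hsecret : IsPerfectlySecret p Q) (hp : ∀ x, 0 < p x)
    (hQ : 0 < ∑ x, ∑ y, ∑ z, Q (x, y, z)) : Fintype.card α ≤ Fintype.card β := by
  have hsum : ∑ z, ∑ x, ∑ y, Q (x, y, z) = ∑ x, ∑ y, ∑ z, Q (x, y, z) :=
    Finset.sum_comm.trans (Fintype.sum_congr _ _ fun _ ↦ Finset.sum_comm)
  obtain ⟨z, hz⟩ := exists_pos_of_sum_pos (hsum ▸ hQ)
  exact hinf.card_le_of_forall_exists_key_pos fun x ↦ hsecret.exists_key_pos (hp x) hz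

end Necessity

section Sufficiency

/-- The joint distribution of message, key and signal when message and key have joint distribution
`P` and the signal is the encryption `enc x y` of the message `x` with the key `y`. -/
def encryptionJoint [DecidableEq γ] [Zero 𝕜] (P : α × β → 𝕜) (enc : α → β → γ) :
    α × β × γ → 𝕜 :=
  fun (x, y, z) ↦ if enc x y = z then P (x, y) else 0

variable [DecidableEq γ]

theorem encryptionJoint_nonneg [Zero 𝕜] [Preorder 𝕜] {P : α × β → 𝕜} (hP : ∀ x y, 0 ≤ P (x, y))
    (enc : α → β → γ) (x : α) (y : β) (z : γ) : 0 ≤ encryptionJoint P enc (x, y, z) :=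
  ite_nonneg (hP x y) le_rfl

theorem isConsistent_encryptionJoint [Fintype γ] [AddCommMonoid 𝕜] (P : α × β → 𝕜)
    (enc : α → β → γ) : IsConsistent P (encryptionJoint P enc) := fun x y ↦
  Fintype.sum_ite_eq (enc x y) fun _ ↦ P (x, y)

theorem isInformative_encryptionJoint [Zero 𝕜] [Preorder 𝕜] (P : α × β → 𝕜) {enc : α → β → γ}
    (henc : ∀ y, Function.Injective (enc · y)) : IsInformative (encryptionJoint P enc) := by
  have enc_eq {x y z} (h : 0 < encryptionJoint P enc (x, y, z)) : enc x y = z := by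
    by_contra hne
    exact h.ne' (if_neg hne)
  exact fun y z x x' h h' ↦ henc y ((enc_eq h).trans (enc_eq h').symm)

theorem sum_key_encryptionJoint [Fintype β] [AddCommMonoid 𝕜] (P : α × β → 𝕜) {enc : α → β → γ}
    {x : α} (henc : Function.Injective (enc x)) (y : β) :
    ∑ y', encryptionJoint P enc (x, y', enc x y) = P (x, y) := by
  classical
  simp only [encryptionJoint, henc.eq_iff, Fintype.sum_ite_eq']

theorem isPerfectlySecret_encryptionJoint [Fintype α] [Fintype β] [Semifield 𝕜] {P : α × β → 𝕜}
    {enc : α → β → γ} (hP : ∑ x, ∑ y, P (x, y) = 1)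
    (huniform : ∀ x y, P (x, y) = (∑ y', P (x, y')) / Fintype.card β)
    (henc : ∀ x, Function.Bijective (enc x)) :
    IsPerfectlySecret (fun x ↦ ∑ y, P (x, y)) (encryptionJoint P enc) := by
  have hXZ (x : α) (z : γ) :
      ∑ y, encryptionJoint P enc (x, y, z) = (∑ y, P (x, y)) / Fintype.card β := by
    obtain ⟨y, rfl⟩ := (henc x).surjective z
    rw [sum_key_encryptionJoint P (henc x).injective, huniform]
  have hZ (z : γ) : ∑ x, ∑ y, encryptionJoint P enc (x, y, z) = 1 / Fintype.card β := by
    simp only [hXZ, ← Finset.sum_div, hP]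
  intro x z
  rw [hXZ, hZ, mul_one_div]

theorem exists_encryption_of_card_le [Fintype α] [Fintype β]
    (hcard : Fintype.card α ≤ Fintype.card β) :
    ∃ enc : α → β → Fin (Fintype.card β),
      (∀ y, Function.Injective (enc · y)) ∧ ∀ x, Function.Bijective (enc x) := by
  obtain ⟨f⟩ := Function.Embedding.nonempty_of_card_le hcard
  cases isEmpty_or_nonempty β with
  | inl hβ => exact ⟨fun x ↦ (hβ.false (f x)).elim, hβ.elim, fun x ↦ (hβ.false (f x)).elim⟩
  | inr _ =>
    have : NeZero (Fintype.card β) := ⟨Fintype.card_ne_zero⟩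
    let e := Fintype.equivFin β
    exact ⟨fun x y ↦ e (f x) + e y,
      fun y ↦ (add_left_injective (e y)).comp (e.injective.comp f.injective),
      fun x ↦ (AddGroup.addLeft_bijective (e (f x))).comp e.bijective⟩

end Sufficiency

theorem shannon_perfect_secrecy_general [Fintype α] [Fintype β] [Semifield 𝕜] [LinearOrder 𝕜]
    [IsStrictOrderedRing 𝕜] (P : α × β → 𝕜) (hP : ∑ x, ∑ y, P (x, y) = 1)
    (hPX : ∀ x, 0 < ∑ y, P (x, y))
    (huniform : ∀ x y, P (x, y) = (∑ y', P (x, y')) / Fintype.card β) :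
    (∃ (γ : Type) (_ : Fintype γ) (Q : α × β × γ → 𝕜),
      (∀ x y z, 0 ≤ Q (x, y, z)) ∧
      ∑ x, ∑ y, ∑ z, Q (x, y, z) = 1 ∧
      IsConsistent P Q ∧
      IsInformative Q ∧
      IsPerfectlySecret (fun x ↦ ∑ y, P (x, y)) Q) ↔
    Fintype.card α ≤ Fintype.card β := by
  constructor
  · rintro ⟨γ, _, Q, -, hQ, -, hinf, hsecret⟩
    exact hinf.card_le_of_isPerfectlySecret hsecret hPX (hQ ▸ one_pos)
  · intro hcard
    obtain ⟨enc, hinj, hbij⟩ := exists_encryption_of_card_le hcard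
    have hP0 (x : α) (y : β) : 0 ≤ P (x, y) :=
      huniform x y ▸ div_nonneg (hPX x).le (Nat.cast_nonneg _)
    have hcons := isConsistent_encryptionJoint P enc
    refine ⟨_, inferInstance, encryptionJoint P enc, encryptionJoint_nonneg hP0 enc, ?_, hcons,
      isInformative_encryptionJoint P hinj, isPerfectlySecret_encryptionJoint hP huniform hbij⟩
    simpa only [hcons _ _] using hP

end PerfectSecrecy

/-- (Shannon's perfect secrecy theorem) If `Y` is uniform and independent
of `X`, i.e. `P(x,y) = P_X(x)/m` with `m = #β`, then a public signal
satisfying consistency, informativeness, and perfect secrecy exists iff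
`#α ≤ #β`. -/
theorem shannon_perfect_secrecy
    {α β : Type} [Fintype α] [Fintype β] [Nonempty α] [Nonempty β]
    (P : α × β → ℝ)
    (hP0 : ∀ x y, 0 ≤ P (x, y))
    (hP1 : ∑ x : α, ∑ y : β, P (x, y) = 1)
    (hPX : ∀ x : α, 0 < ∑ y : β, P (x, y))
    (huniform : ∀ (x : α) (y : β),
      P (x, y) = (∑ y' : β, P (x, y')) / (Fintype.card β : ℝ)) :
    (∃ (γ : Type) (_ : Fintype γ) (Q : α × β × γ → ℝ),
      (∀ x y z, 0 ≤ Q (x, y, z)) ∧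
      (∑ x : α, ∑ y : β, ∑ z : γ, Q (x, y, z)) = 1 ∧
      -- consistency
      (∀ x y, ∑ z : γ, Q (x, y, z) = P (x, y)) ∧
      -- informativeness
      (∀ (y : β) (z : γ) (x x' : α),
        0 < Q (x, y, z) → 0 < Q (x', y, z) → x = x') ∧
      -- perfect secrecy
      (∀ (x : α) (z : γ), ∑ y : β, Q (x, y, z) =
        (∑ y : β, P (x, y)) * (∑ x' : α, ∑ y : β, Q (x', y, z)))) ↔
    Fintype.card α ≤ Fintype.card β :=
  shannon_perfect_secrecy_general P hP1 hPX huniform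
end

section
/- (Key necessity inequality) Let γ be a finite type and Q : α × β × γ → ℝ a nonnegative function summing to 1 that satisfies informativeness (for every (y,z) there is at most one x with Q(x,y,z) > 0) and perfect secrecy (Q_XZ(x,z) = P_X(x)·Q_Z(z) for all x,z, where Q_XZ(x,z) = ∑_y Q(x,y,z) and Q_Z(z) = ∑_{x,y} Q(x,y,z)). For x ∈ α, y ∈ β define φ(x,y) = { z ∈ γ : Q(x,y,z) > 0 }. Then for every y ∈ β, ∑_{x ∈ α} ∑_{z ∈ φ(x,y)} Q_Z(z) ≤ 1. -/
section RevealingSignals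

variable {α β γ M : Type*}

/-- The set `φ(x, y)` of signals `z` that occur with positive weight `Q (x, y, z)` alongside
`x` and `y`. Under informativeness, a signal in it reveals `x` to an observer of `y`. -/
def revealingSignals [Fintype γ] [Zero M] [LT M] [DecidableLT M]
    (Q : α × β × γ → M) (x : α) (y : β) : Finset γ :=
  Finset.univ.filter fun z => 0 < Q (x, y, z)

/-- The marginal weight `Q_Z` of the signal, for a weight `Q` on triples which need not be
normalized. -/
def signalMarginal [Fintype α] [Fintype β] [AddCommMonoid M] (Q : α × β × γ → M) (z : γ) : M :=
  ∑ x, ∑ y, Q (x, y, z)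

lemma pairwiseDisjoint_revealingSignals [Fintype γ] [Zero M] [LT M] [DecidableLT M]
    {Q : α × β × γ → M} {y : β}
    (hinfo : ∀ z x x', 0 < Q (x, y, z) → 0 < Q (x', y, z) → x = x') (s : Set α) :
    s.PairwiseDisjoint fun x => revealingSignals Q x y := by
  intro x _ x' _ hne
  refine Finset.disjoint_filter.mpr fun z _ hx hx' => hne ?_
  exact hinfo z x x' hx hx'

lemma sum_signalMarginal [Fintype α] [Fintype β] [Fintype γ] [AddCommMonoid M]
    (Q : α × β × γ → M) :
    ∑ z, signalMarginal Q z = ∑ x, ∑ y, ∑ z, Q (x, y, z) := by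
  unfold signalMarginal
  rw [Finset.sum_comm]
  exact Finset.sum_congr rfl fun x _ => Finset.sum_comm

variable [AddCommMonoid M] [PartialOrder M] [IsOrderedAddMonoid M]

lemma signalMarginal_nonneg [Fintype α] [Fintype β] {Q : α × β × γ → M}
    (hQ0 : ∀ x y z, 0 ≤ Q (x, y, z)) (z : γ) : 0 ≤ signalMarginal Q z :=
  Finset.sum_nonneg fun x _ => Finset.sum_nonneg fun y _ => hQ0 x y z

theorem revealing_signal_probability_sum_le_one_general
    [Fintype α] [Fintype β] [Fintype γ] [DecidableLT M]
    {Q : α × β × γ → M} (hQ0 : ∀ x y z, 0 ≤ Q (x, y, z)) {y : β}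
    (hinfo : ∀ z x x', 0 < Q (x, y, z) → 0 < Q (x', y, z) → x = x') :
    ∑ x, ∑ z ∈ revealingSignals Q x y, signalMarginal Q z ≤ ∑ x, ∑ y, ∑ z, Q (x, y, z) := by
  have hdisj := pairwiseDisjoint_revealingSignals hinfo (Finset.univ : Finset α)
  calc
    ∑ x, ∑ z ∈ revealingSignals Q x y, signalMarginal Q z
      = ∑ z ∈ Finset.univ.disjiUnion (fun x => revealingSignals Q x y) hdisj,
          signalMarginal Q z := (Finset.sum_disjiUnion _ _ hdisj).symm
    _ ≤ ∑ z, signalMarginal Q z := Finset.sum_le_univ_sum_of_nonneg (signalMarginal_nonneg hQ0)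
    _ = ∑ x, ∑ y, ∑ z, Q (x, y, z) := sum_signalMarginal Q

end RevealingSignals

/-- (Key necessity inequality) Under informativeness and perfect secrecy,
for each `y` the total probability of the revealing signals `φ(x,y)`,
summed over `x`, is at most 1. -/
theorem revealing_signal_probability_sum_le_one
    {α β : Type} [Fintype α] [Fintype β] [Nonempty α] [Nonempty β]
    (P : α × β → ℝ)
    (hP0 : ∀ x y, 0 ≤ P (x, y))
    (hP1 : ∑ x : α, ∑ y : β, P (x, y) = 1)
    (hPX : ∀ x : α, 0 < ∑ y : β, P (x, y))
    {γ : Type} [Fintype γ]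
    (Q : α × β × γ → ℝ)
    (hQ0 : ∀ x y z, 0 ≤ Q (x, y, z))
    (hQ1 : ∑ x : α, ∑ y : β, ∑ z : γ, Q (x, y, z) = 1)
    -- informativeness
    (hinfo : ∀ (y : β) (z : γ) (x x' : α),
      0 < Q (x, y, z) → 0 < Q (x', y, z) → x = x')
    -- perfect secrecy
    (hsecr : ∀ (x : α) (z : γ), ∑ y : β, Q (x, y, z) =
      (∑ y : β, P (x, y)) * (∑ x' : α, ∑ y : β, Q (x', y, z))) :
    ∀ y : β,
      ∑ x : α, ∑ z ∈ Finset.univ.filter (fun z : γ => 0 < Q (x, y, z)),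
        (∑ x' : α, ∑ y' : β, Q (x', y', z)) ≤ 1 := by
  intro y
  exact (revealing_signal_probability_sum_le_one_general hQ0 (hinfo y)).trans_eq hQ1
end
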